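/- Let m be a real number with m ≥ 1 and let ℓ = a + bi be a complex number with b > 0, such that |ℓ| ≥ m, |m + ℓ| ≥ |ℓ|, and |m − ℓ| ≥ |ℓ|, and such that b·m ≥ 3.35. Then for all integers p and q, if |p| > 7 or |q| > 3, then |p·m + q·ℓ| > 6. -/

import Mathlib

theorem stmt_0 (m a b : ℝ) (ℓ : ℂ)
    (hℓ : ℓ = a + b * Complex.I)
    (hm : 1 ≤ m) (hb : 0 < b)
    (hlen : m ≤ ‖ℓ‖)
    (hplus : ‖ℓ‖ ≤ ‖(m : ℂ) + ℓ‖)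
    (hminus : ‖ℓ‖ ≤ ‖(m : ℂ) - ℓ‖)
    (harea : 3.35 ≤ b * m) :
    ∀ p q : ℤ, (7 < |p| ∨ 3 < |q|) →
      6 < ‖(p : ℂ) * (m : ℂ) + (q : ℂ) * ℓ‖ := by
  intro p q h
  have n1 : ‖ℓ‖ ^ 2 = a ^ 2 + b ^ 2 := by
    rw [← Complex.normSq_eq_norm_sq, hℓ, Complex.normSq_apply]; simp; ring
  have n2 : ‖(m : ℂ) + ℓ‖ ^ 2 = (m + a) ^ 2 + b ^ 2 := by
    rw [← Complex.normSq_eq_norm_sq, hℓ, Complex.normSq_apply]; simp; ring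
  have n3 : ‖(m : ℂ) - ℓ‖ ^ 2 = (m - a) ^ 2 + b ^ 2 := by
    rw [← Complex.normSq_eq_norm_sq, hℓ, Complex.normSq_apply]; simp; ring
  have n4 : ‖(p : ℂ) * (m : ℂ) + (q : ℂ) * ℓ‖ ^ 2 = (p * m + q * a) ^ 2 + (q * b) ^ 2 := by
    rw [← Complex.normSq_eq_norm_sq, hℓ, Complex.normSq_apply]; simp; ring
  have h1 : m ^ 2 ≤ a ^ 2 + b ^ 2 := by
    rw [← n1]; exact pow_le_pow_left₀ (by linarith) hlen 2
  have h2 : a ^ 2 + b ^ 2 ≤ (m + a) ^ 2 + b ^ 2 := by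
    rw [← n1, ← n2]; exact pow_le_pow_left₀ (norm_nonneg _) hplus 2
  have h3 : a ^ 2 + b ^ 2 ≤ (m - a) ^ 2 + b ^ 2 := by
    rw [← n1, ← n3]; exact pow_le_pow_left₀ (norm_nonneg _) hminus 2
  have ha1 : -(m / 2) ≤ a := by
    by_contra hc
    push Not at hc
    nlinarith
  have ha2 : a ≤ m / 2 := by
    by_contra hc
    push Not at hc
    nlinarith
  have habs : |a| ≤ m / 2 := abs_le.mpr ⟨ha1, ha2⟩
  refine lt_of_pow_lt_pow_left₀ 2 (norm_nonneg _) ?_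
  rw [n4]
  by_cases hq : 3 < |q|
  · have hq' : (4 : ℝ) ≤ |(q : ℝ)| := by exact_mod_cast hq
    have hq2 : (16 : ℝ) ≤ (q : ℝ) ^ 2 := by
      rw [← sq_abs]; nlinarith
    have ha : a ^ 2 ≤ m ^ 2 / 4 := by nlinarith
    have hb2 : 3 / 4 * m ^ 2 ≤ b ^ 2 := by linarith
    have hbm : (11 : ℝ) ≤ b ^ 2 * m ^ 2 := by
      norm_num at harea
      nlinarith
    have hb3 : (9 / 4 : ℝ) < b ^ 2 := by
      by_contra hc
      push Not at hc
      nlinarith [sq_nonneg m, sq_nonneg b]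
    nlinarith [sq_nonneg (p * m + q * a)]
  · have hp : 7 < |p| := h.resolve_right hq
    have hp' : (8 : ℝ) ≤ |(p : ℝ)| := by exact_mod_cast hp
    have hq' : |(q : ℝ)| ≤ 3 := by exact_mod_cast not_lt.mp hq
    have e1 : |(p : ℝ) * m| ≤ |p * m + q * a| + |(q : ℝ) * a| := by
      have := abs_sub (p * m + q * a) (q * a)
      simpa using this
    rw [abs_mul, abs_mul, abs_of_pos (show 0 < m by linarith)] at e1
    have e2 : |(q : ℝ)| * |a| ≤ 3 * (m / 2) :=
      mul_le_mul hq' habs (abs_nonneg _) (by norm_num)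
    have e3 : 6.5 ≤ |p * m + q * a| := by norm_num; nlinarith
    rw [← sq_abs (p * m + q * a)]
    generalize |p * m + q * a| = t at *
    have e4 := pow_le_pow_left₀ (by norm_num) e3 2
    have e5 := sq_nonneg ((q : ℝ) * b)
    norm_num at e4
    linarith
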